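/- arXiv:1803.07270 — 2 statements merged into one kernel-verified Lean document; each statement's English description precedes it below -/
import Mathlib

section
/- (One step of the transformed Riccati recursion preserves positive semidefiniteness) Fix i ∈ {1,…,L}. Let X_1,…,X_L ∈ ℝ^{n×n} be symmetric positive semidefinite, and set W = Σ_{j=1}^L ρ_{i,j} X_j. Let Q̃_i ∈ ℝ^{n×n} symmetric, L̃_i ∈ ℝ^{m×n}, R̃_i ∈ ℝ^{m×m} symmetric be such that the block matrix [[Q̃_i, L̃_iᵀ],[L̃_i, R̃_i]] is positive semidefinite. Define Υ̃_i = C_iᵀ W C_i + σ² D_iᵀ W D_i + R̃_i and M̃_i = C_iᵀ W A_i + σ² D_iᵀ W B_i + L̃_i, let Υ̃_i† be the Moore–Penrose pseudoinverse of Υ̃_i, and assume Υ̃_i Υ̃_i† M̃_i = M̃_i. Then A_iᵀ W A_i + σ² B_iᵀ W B_i + Q̃_i − M̃_iᵀ Υ̃_i† M̃_i is positive semidefinite. -/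
open Matrix

/-- One step of the transformed Riccati recursion preserves positive semidefiniteness. -/
theorem transformed_riccati_step_psd (n m L : ℕ)
    (A B : Fin L → Matrix (Fin n) (Fin n) ℝ)
    (C D : Fin L → Matrix (Fin n) (Fin m) ℝ)
    (σ : ℝ) (ρ : Fin L → Fin L → ℝ)
    (hρ0 : ∀ i j, 0 ≤ ρ i j) (hρ1 : ∀ i, ∑ j, ρ i j = 1)
    (i : Fin L)
    (X : Fin L → Matrix (Fin n) (Fin n) ℝ) (hXsymm : ∀ j, (X j)ᵀ = X j)
    (hXpsd : ∀ j, ∀ v : Fin n → ℝ, 0 ≤ v ⬝ᵥ (X j *ᵥ v))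
    (W : Matrix (Fin n) (Fin n) ℝ) (hW : W = ∑ j, ρ i j • X j)
    (Qt : Matrix (Fin n) (Fin n) ℝ) (Lt : Matrix (Fin m) (Fin n) ℝ)
    (Rt : Matrix (Fin m) (Fin m) ℝ) (hQt : Qtᵀ = Qt) (hRt : Rtᵀ = Rt)
    (hblock : ∀ z : Fin n ⊕ Fin m → ℝ, 0 ≤ z ⬝ᵥ (Matrix.fromBlocks Qt Ltᵀ Lt Rt *ᵥ z))
    (Υt : Matrix (Fin m) (Fin m) ℝ)
    (hΥt : Υt = (C i)ᵀ * W * C i + σ ^ 2 • ((D i)ᵀ * W * D i) + Rt)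
    (Mt : Matrix (Fin m) (Fin n) ℝ)
    (hMt : Mt = (C i)ᵀ * W * A i + σ ^ 2 • ((D i)ᵀ * W * B i) + Lt)
    (Υd : Matrix (Fin m) (Fin m) ℝ)
    (hd1 : Υt * Υd * Υt = Υt) (hd2 : Υd * Υt * Υd = Υd)
    (hd3 : (Υt * Υd)ᵀ = Υt * Υd) (hd4 : (Υd * Υt)ᵀ = Υd * Υt)
    (hreg : Υt * Υd * Mt = Mt) :
    ∀ x : Fin n → ℝ,
      0 ≤ x ⬝ᵥ (((A i)ᵀ * W * A i + σ ^ 2 • ((B i)ᵀ * W * B i) + Qt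
          - Mtᵀ * Υd * Mt) *ᵥ x) := by
  intro x
  have hWs : Wᵀ = W := by
    rw [hW, Matrix.transpose_sum]
    simp [Matrix.transpose_smul, hXsymm]
  have hWp : ∀ v : Fin n → ℝ, 0 ≤ v ⬝ᵥ (W *ᵥ v) := by
    intro v
    rw [hW, Matrix.sum_mulVec, dotProduct_sum]
    refine Finset.sum_nonneg fun j _ => ?_
    rw [Matrix.smul_mulVec, dotProduct_smul, smul_eq_mul]
    exact mul_nonneg (hρ0 i j) (hXpsd j v)
  have key : ∀ {p q r : ℕ} (E : Matrix (Fin p) (Fin q) ℝ) (F : Matrix (Fin p) (Fin r) ℝ)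
      (V : Matrix (Fin p) (Fin p) ℝ) (v : Fin q → ℝ) (w : Fin r → ℝ),
      v ⬝ᵥ ((Eᵀ * V * F) *ᵥ w) = (E *ᵥ v) ⬝ᵥ (V *ᵥ (F *ᵥ w)) := by
    intro p q r E F V v w
    rw [← Matrix.mulVec_mulVec, ← Matrix.mulVec_mulVec, Matrix.dotProduct_mulVec,
      Matrix.vecMul_transpose]
  have hsw : ∀ v w : Fin n → ℝ, v ⬝ᵥ (W *ᵥ w) = w ⬝ᵥ (W *ᵥ v) := by
    intro v w
    rw [Matrix.dotProduct_mulVec, ← Matrix.mulVec_transpose, hWs, dotProduct_comm]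
  obtain ⟨u, hu⟩ : ∃ u, u = -(Υd *ᵥ (Mt *ᵥ x)) := ⟨_, rfl⟩
  have e1 : x ⬝ᵥ ((Mtᵀ * Υd * Mt) *ᵥ x) = -(u ⬝ᵥ (Mt *ᵥ x)) := by
    rw [key, hu, neg_dotProduct, neg_neg, dotProduct_comm]
  have e2 : u ⬝ᵥ (Mt *ᵥ x) = -(u ⬝ᵥ (Υt *ᵥ u)) := by
    have : Mt *ᵥ x = -(Υt *ᵥ u) := by
      rw [hu, Matrix.mulVec_neg, neg_neg, Matrix.mulVec_mulVec, Matrix.mulVec_mulVec, hreg]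
    conv_lhs => rw [this]
    rw [dotProduct_neg]
  have h1 := hWp (A i *ᵥ x + C i *ᵥ u)
  have h2 := mul_nonneg (sq_nonneg σ) (hWp (B i *ᵥ x + D i *ᵥ u))
  have h3 := hblock (Sum.elim x u)
  have e3 : x ⬝ᵥ (Ltᵀ *ᵥ u) = u ⬝ᵥ (Lt *ᵥ x) := by
    rw [Matrix.dotProduct_mulVec, Matrix.vecMul_transpose, dotProduct_comm]
  have e4 : u ⬝ᵥ (Mt *ᵥ x) = (C i *ᵥ u) ⬝ᵥ (W *ᵥ (A i *ᵥ x))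
      + σ ^ 2 * ((D i *ᵥ u) ⬝ᵥ (W *ᵥ (B i *ᵥ x))) + u ⬝ᵥ (Lt *ᵥ x) := by
    rw [hMt, Matrix.add_mulVec, Matrix.add_mulVec, dotProduct_add, dotProduct_add,
      Matrix.smul_mulVec, dotProduct_smul, smul_eq_mul, key, key]
  have e5 : u ⬝ᵥ (Υt *ᵥ u) = (C i *ᵥ u) ⬝ᵥ (W *ᵥ (C i *ᵥ u))
      + σ ^ 2 * ((D i *ᵥ u) ⬝ᵥ (W *ᵥ (D i *ᵥ u))) + u ⬝ᵥ (Rt *ᵥ u) := by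
    rw [hΥt, Matrix.add_mulVec, Matrix.add_mulVec, dotProduct_add, dotProduct_add,
      Matrix.smul_mulVec, dotProduct_smul, smul_eq_mul, key, key]
  rw [Matrix.fromBlocks_mulVec, sumElim_dotProduct_sumElim] at h3
  simp only [Sum.elim_comp_inl, Sum.elim_comp_inr, dotProduct_add] at h3
  rw [Matrix.mulVec_add, dotProduct_add, add_dotProduct, add_dotProduct,
    hsw (A i *ᵥ x) (C i *ᵥ u)] at h1
  rw [Matrix.mulVec_add, dotProduct_add, add_dotProduct, add_dotProduct,
    hsw (B i *ᵥ x) (D i *ᵥ u)] at h2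
  rw [Matrix.sub_mulVec, Matrix.add_mulVec, Matrix.add_mulVec, dotProduct_sub, dotProduct_add,
    dotProduct_add, Matrix.smul_mulVec, dotProduct_smul, smul_eq_mul, e1, key,
    key]
  linarith
end

section
/- (The regularity condition of the transformed Riccati recursion holds automatically under the kernel restriction) Let A, B ∈ ℝ^{n×n}, C, D ∈ ℝ^{n×m}, σ ∈ ℝ, let W ∈ ℝ^{n×n} be symmetric positive semidefinite, let W̃ ∈ ℝ^{n×n} be symmetric, and let R̃ ∈ ℝ^{m×m} be symmetric positive semidefinite with Ker(R̃) ⊆ Ker(C) ∩ Ker(D). Set L̃ = Cᵀ W̃ A + σ² Dᵀ W̃ B, Υ̃ = Cᵀ W C + σ² Dᵀ W D + R̃, and M̃ = Cᵀ W A + σ² Dᵀ W B + L̃, and let Υ̃† be the Moore–Penrose pseudoinverse of Υ̃. Then Υ̃ Υ̃† M̃ = M̃. -/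
open Matrix

/-- The regularity condition of the transformed Riccati recursion holds
automatically under the kernel restriction `Ker(R̃) ⊆ Ker(C) ∩ Ker(D)`. -/
theorem transformed_riccati_regularity (n m : ℕ)
    (A B : Matrix (Fin n) (Fin n) ℝ)
    (C D : Matrix (Fin n) (Fin m) ℝ) (σ : ℝ)
    (W : Matrix (Fin n) (Fin n) ℝ) (hW : Wᵀ = W)
    (hWpsd : ∀ x : Fin n → ℝ, 0 ≤ x ⬝ᵥ (W *ᵥ x))
    (Wt : Matrix (Fin n) (Fin n) ℝ) (hWt : Wtᵀ = Wt)
    (Rt : Matrix (Fin m) (Fin m) ℝ) (hRt : Rtᵀ = Rt)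
    (hRtpsd : ∀ v : Fin m → ℝ, 0 ≤ v ⬝ᵥ (Rt *ᵥ v))
    (hkerR : ∀ v : Fin m → ℝ, Rt *ᵥ v = 0 → C *ᵥ v = 0 ∧ D *ᵥ v = 0)
    (Lt : Matrix (Fin m) (Fin n) ℝ) (hLt : Lt = Cᵀ * Wt * A + σ ^ 2 • (Dᵀ * Wt * B))
    (Υt : Matrix (Fin m) (Fin m) ℝ)
    (hΥt : Υt = Cᵀ * W * C + σ ^ 2 • (Dᵀ * W * D) + Rt)
    (Mt : Matrix (Fin m) (Fin n) ℝ)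
    (hMt : Mt = Cᵀ * W * A + σ ^ 2 • (Dᵀ * W * B) + Lt)
    (Υd : Matrix (Fin m) (Fin m) ℝ)
    (hd1 : Υt * Υd * Υt = Υt) (hd2 : Υd * Υt * Υd = Υd)
    (hd3 : (Υt * Υd)ᵀ = Υt * Υd) (hd4 : (Υd * Υt)ᵀ = Υd * Υt) :
    Υt * Υd * Mt = Mt := by
  have hR : Rt.PosSemidef := by
    refine Matrix.PosSemidef.of_dotProduct_mulVec_nonneg ?_ ?_
    · rw [Matrix.IsHermitian, Matrix.conjTranspose_eq_transpose_of_trivial, hRt]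
    · intro x
      simpa using hRtpsd x
  have hker : ∀ w : Fin m → ℝ, Υt *ᵥ w = 0 → C *ᵥ w = 0 ∧ D *ᵥ w = 0 := by
    intro w hw
    apply hkerR
    have key : ∀ E : Matrix (Fin n) (Fin m) ℝ,
        w ⬝ᵥ ((Eᵀ * W * E) *ᵥ w) = (E *ᵥ w) ⬝ᵥ (W *ᵥ (E *ᵥ w)) := by
      intro E
      rw [← Matrix.mulVec_mulVec, ← Matrix.mulVec_mulVec, Matrix.dotProduct_mulVec,
        Matrix.vecMul_transpose]
    have h0 : w ⬝ᵥ (Υt *ᵥ w) = 0 := by rw [hw]; simp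
    rw [hΥt, Matrix.add_mulVec, Matrix.add_mulVec, Matrix.smul_mulVec, dotProduct_add,
      dotProduct_add, dotProduct_smul, key, key, smul_eq_mul] at h0
    have h1 := hWpsd (C *ᵥ w)
    have h2 := mul_nonneg (sq_nonneg σ) (hWpsd (D *ᵥ w))
    have h3 := hRtpsd w
    have h4 : w ⬝ᵥ (Rt *ᵥ w) = 0 := by linarith
    exact (hR.dotProduct_mulVec_zero_iff w).1 (by simpa using h4)
  have hsym : Υtᵀ = Υt := by
    rw [hΥt]
    simp [Matrix.transpose_mul, hW, hRt, Matrix.mul_assoc]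
  have hΥP : Υt * (Υt * Υd) = Υt := by
    have h := congrArg Matrix.transpose hd1
    rwa [Matrix.transpose_mul, hd3, hsym] at h
  have hz : ∀ v : Fin m → ℝ, Υt *ᵥ (v - (Υt * Υd) *ᵥ v) = 0 := by
    intro v
    rw [Matrix.mulVec_sub, Matrix.mulVec_mulVec, hΥP, sub_self]
  have hfix : ∀ E : Matrix (Fin n) (Fin m) ℝ,
      (∀ w : Fin m → ℝ, Υt *ᵥ w = 0 → E *ᵥ w = 0) → Υt * Υd * Eᵀ = Eᵀ := by
    intro E hE
    have h : E * (Υt * Υd) = E := by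
      apply Matrix.ext_of_mulVec_single
      intro i
      have h := hE _ (hz (Pi.single i 1))
      rw [Matrix.mulVec_sub, Matrix.mulVec_mulVec, sub_eq_zero] at h
      exact h.symm
    have h' := congrArg Matrix.transpose h
    rwa [Matrix.transpose_mul, hd3] at h'
  have hC := hfix C fun w hw => (hker w hw).1
  have hD := hfix D fun w hw => (hker w hw).2
  have hC' : ∀ X : Matrix (Fin n) (Fin n) ℝ, Υt * Υd * (Cᵀ * X) = Cᵀ * X := by
    intro X; rw [← Matrix.mul_assoc, hC]
  have hD' : ∀ X : Matrix (Fin n) (Fin n) ℝ, Υt * Υd * (Dᵀ * X) = Dᵀ * X := by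
    intro X; rw [← Matrix.mul_assoc, hD]
  rw [hMt, hLt, Matrix.mul_assoc Cᵀ, Matrix.mul_assoc Dᵀ, Matrix.mul_assoc Cᵀ,
    Matrix.mul_assoc Dᵀ]
  simp only [Matrix.mul_add, Matrix.mul_smul, hC', hD']
end
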